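/- Let F be a finite field with q elements. For each n ≥ 1 let e_n denote the number of matrices X ∈ M_n(F) such that both X and X − I_n are invertible, and set e_0 = 0... Prove that for all n ≥ 1, e_n = e_{n−1} · (q^n − 1) · q^(n−1) + (−1)^n · q^(n(n−1)/2). -/

import Mathlib

/-!
Write `[q]ₖ = ∏_{i=1}^k (1 - qⁱ)`. If the fixed space of `g ∈ GL(V)`, `dim V = n`, has dimension
`d`, then it contains `∏_{i<k} (q^d - qⁱ)` linearly independent `k`-tuples, and weighting these
counts by `1 / [q]ₖ` and summing over `k ≤ n` telescopes to `1` if `d = 0` and to `0` otherwise.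
So the number `eₙ` of linear derangements is
`∑_{k ≤ n} (1 / [q]ₖ) · #{(g, s) | s an independent k-tuple fixed by g}`. Since `GL(V)` is
transitive on independent `k`-tuples, each of these counts is `|GL(V)|` by Burnside's lemma, whence
`eₙ = |GLₙ| · ∑_{k ≤ n} 1 / [q]ₖ`. The recurrence splits off the term `k = n`.
-/

open Finset Module MulAction

section PowerIdentities

theorem sum_prod_sub_pow_div_one_sub_pow {K : Type*} [Field K] {q : K} {n : ℕ}
    (hq : ∀ i < n, q ^ (i + 1) ≠ 1) (x : K) :
    ∑ k ∈ range (n + 1), ∏ i ∈ range k, (x - q ^ i) / (1 - q ^ (i + 1)) =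
      ∏ i ∈ range n, (x - q ^ (i + 1)) / (1 - q ^ (i + 1)) := by
  induction n with
  | zero => simp
  | succ n ih =>
    have hn : 1 - q ^ (n + 1) ≠ 0 := sub_ne_zero.2 (hq n n.lt_succ_self).symm
    have last_term : ∏ i ∈ range (n + 1), (x - q ^ i) / (1 - q ^ (i + 1)) =
        (∏ i ∈ range n, (x - q ^ (i + 1)) / (1 - q ^ (i + 1))) *
          ((x - 1) / (1 - q ^ (n + 1))) := by
      rw [prod_div_distrib, prod_range_succ', prod_range_succ, prod_div_distrib, pow_zero,
        mul_div_mul_comm]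
    rw [sum_range_succ, ih fun i hi ↦ hq i (hi.trans n.lt_succ_self), last_term, prod_range_succ]
    field_simp
    ring

theorem sum_prod_pow_sub_pow_div_one_sub_pow {K : Type*} [Field K] {q : K} {n d : ℕ}
    (hq : ∀ i < n, q ^ (i + 1) ≠ 1) (hd : d ≤ n) :
    ∑ k ∈ range (n + 1), ∏ i ∈ range k, (q ^ d - q ^ i) / (1 - q ^ (i + 1)) =
      if d = 0 then 1 else 0 := by
  rw [sum_prod_sub_pow_div_one_sub_pow hq]
  split_ifs with h
  · subst h
    exact prod_eq_one fun i hi ↦ by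
      rw [pow_zero, div_self (sub_ne_zero.2 (hq i (mem_range.1 hi)).symm)]
  · refine prod_eq_zero (i := d - 1) (mem_range.2 (by lia)) ?_
    rw [Nat.sub_add_cancel (Nat.one_le_iff_ne_zero.2 h), sub_self, zero_div]

theorem prod_pow_sub_pow_succ {R : Type*} [CommRing R] (q : R) (n : ℕ) :
    ∏ i ∈ range (n + 1), (q ^ (n + 1) - q ^ i) =
      (∏ i ∈ range n, (q ^ n - q ^ i)) * (q ^ (n + 1) - 1) * q ^ n := by
  have factor_q (i : ℕ) : q ^ (n + 1) - q ^ (i + 1) = (q ^ n - q ^ i) * q := by ring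
  simp only [prod_range_succ', factor_q, prod_mul_distrib, prod_const, card_range, pow_zero]
  ring

theorem prod_pow_sub_pow_mul_prod_inv_one_sub_pow {K : Type*} [Field K] {q : K} {n : ℕ}
    (hq : ∀ i < n, q ^ (i + 1) ≠ 1) :
    (∏ i ∈ range n, (q ^ n - q ^ i)) * ∏ i ∈ range n, (1 - q ^ (i + 1))⁻¹ =
      (-1) ^ n * q ^ (n * (n - 1) / 2) := by
  induction n with
  | zero => simp
  | succ n ih =>
    have hn : 1 - q ^ (n + 1) ≠ 0 := sub_ne_zero.2 (hq n n.lt_succ_self).symm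
    have cancel : (q ^ (n + 1) - 1) * (1 - q ^ (n + 1))⁻¹ = -1 := by
      rw [← neg_sub, neg_mul, mul_inv_cancel₀ hn]
    calc
      _ = ((∏ i ∈ range n, (q ^ n - q ^ i)) * ∏ i ∈ range n, (1 - q ^ (i + 1))⁻¹) * q ^ n *
          ((q ^ (n + 1) - 1) * (1 - q ^ (n + 1))⁻¹) := by
        rw [prod_pow_sub_pow_succ, prod_range_succ]
        ring
      _ = (-1) ^ (n + 1) * q ^ ((n + 1) * (n + 1 - 1) / 2) := by
        rw [ih fun i hi ↦ hq i (hi.trans n.lt_succ_self), cancel, Nat.triangle_succ]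
        ring

end PowerIdentities

theorem card_pow_succ_ne_one (α : Type*) [Fintype α] [Nontrivial α] (i : ℕ) :
    (Fintype.card α : ℚ) ^ (i + 1) ≠ 1 :=
  (one_lt_pow₀ (mod_cast Fintype.one_lt_card) i.succ_ne_zero).ne'

theorem sum_card_fixedBy_of_isPretransitive (G X : Type*) [Group G] [MulAction G X] [Fintype G]
    [Nonempty X] [IsPretransitive G X] :
    ∑ g : G, Nat.card (fixedBy X g) = Nat.card G := by
  classical
  have := Finite.of_surjective _ (surjective_smul G (Classical.arbitrary X))
  have := Fintype.ofFinite X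
  have := Fintype.ofFinite (orbitRel.Quotient G X)
  have one_orbit : Fintype.card (orbitRel.Quotient G X) = 1 := by
    obtain ⟨_⟩ := (pretransitive_iff_unique_quotient_of_nonempty G X).1 inferInstance
    exact Fintype.card_unique
  simpa [one_orbit] using sum_card_fixedBy_eq_card_orbits_mul_card_group G X

section LinearIndependentFamilies

variable (K V ι : Type*) [DivisionRing K] [AddCommGroup V] [Module K V]

/-- The linearly independent families `ι → V`, with the diagonal action of the general linear
group, here the group `V ≃ₗ[K] V`. -/
def linearIndependentFamilies : SubMulAction (V ≃ₗ[K] V) (ι → V) where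
  carrier := {s | LinearIndependent K s}
  smul_mem' g _ hs := hs.map' (g : V →ₗ[K] V) g.ker

instance isPretransitive_linearIndependentFamilies [Finite ι] :
    IsPretransitive (V ≃ₗ[K] V) (linearIndependentFamilies K V ι) where
  exists_smul_eq := by
    rintro ⟨s, hs : LinearIndependent K s⟩ ⟨t, ht : LinearIndependent K t⟩
    have : FiniteDimensional K (Submodule.span K (Set.range s)) :=
      FiniteDimensional.span_of_finite K (Set.finite_range s)
    obtain ⟨g, hg⟩ := Submodule.exists_linearEquiv_restrict_eq
      (hs.linearCombinationEquiv.symm ≪≫ₗ ht.linearCombinationEquiv)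
    refine ⟨g, Subtype.ext <| funext fun i ↦ ?_⟩
    change g (s i) = t i
    simpa using (hg (hs.linearCombinationEquiv (Finsupp.single i 1))).symm

variable {K V}

/-- The independent families fixed by `g` are those of the fixed space of `g`. -/
def fixedByLinearIndependentFamiliesEquiv (g : V ≃ₗ[K] V) :
    fixedBy (linearIndependentFamilies K V ι) g ≃
      {s : ι → (g : V →ₗ[K] V).fixedSubmodule // LinearIndependent K s} where
  toFun s := ⟨fun i ↦ ⟨s.1.1 i, congrFun (congrArg Subtype.val s.2) i⟩,
    .of_comp (Submodule.subtype _) s.1.2⟩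
  invFun s := ⟨⟨fun i ↦ s.1 i, s.2.map' (Submodule.subtype _) (Submodule.ker_subtype _)⟩,
    Subtype.ext <| funext fun i ↦ (s.1 i).2⟩
  left_inv _ := rfl
  right_inv _ := rfl

end LinearIndependentFamilies

section Counting

variable {K V : Type*} [DivisionRing K] [Fintype K] [AddCommGroup V] [Module K V] [Finite V]

theorem cast_card_linearIndependent (R : Type*) [CommRing R] (k : ℕ) :
    (Nat.card {s : Fin k → V // LinearIndependent K s} : R) =
      ∏ i ∈ range k, ((Fintype.card K : R) ^ finrank K V - (Fintype.card K : R) ^ i) := by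
  rcases le_or_gt k (finrank K V) with hk | hk
  · rw [card_linearIndependent hk, Nat.cast_prod, ← Fin.prod_univ_eq_prod_range]
    refine prod_congr rfl fun i _ ↦ ?_
    rw [Nat.cast_sub (Nat.pow_le_pow_right Fintype.card_pos (i.2.le.trans hk))]
    push_cast
    rfl
  · have : IsEmpty {s : Fin k → V // LinearIndependent K s} :=
      ⟨fun s ↦ hk.not_ge (by simpa using s.2.fintype_card_le_finrank)⟩
    rw [Nat.card_of_isEmpty, Nat.cast_zero, prod_eq_zero (mem_range.2 hk) (sub_self _)]

theorem sum_prod_pow_finrank_fixedSubmodule_sub_pow [Fintype (V ≃ₗ[K] V)] (R : Type*) [CommRing R]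
    {k : ℕ} (hk : k ≤ finrank K V) :
    ∑ g : V ≃ₗ[K] V, ∏ i ∈ range k,
      ((Fintype.card K : R) ^ finrank K (g : V →ₗ[K] V).fixedSubmodule - (Fintype.card K : R) ^ i) =
      Nat.card (V ≃ₗ[K] V) := by
  have : Nonempty (linearIndependentFamilies K V (Fin k)) :=
    let ⟨s, hs⟩ := exists_linearIndependent_of_le_finrank hk
    ⟨⟨s, hs⟩⟩
  rw [← sum_card_fixedBy_of_isPretransitive (V ≃ₗ[K] V) (linearIndependentFamilies K V (Fin k)),
    Nat.cast_sum]
  refine sum_congr rfl fun g _ ↦ ?_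
  rw [Nat.card_congr (fixedByLinearIndependentFamiliesEquiv (Fin k) g),
    cast_card_linearIndependent]

theorem card_linearEquiv_fixedSubmodule_eq_bot :
    (Nat.card {g : V ≃ₗ[K] V // (g : V →ₗ[K] V).fixedSubmodule = ⊥} : ℚ) =
      Nat.card (V ≃ₗ[K] V) *
        ∑ k ∈ range (finrank K V + 1), ∏ i ∈ range k, (1 - (Fintype.card K : ℚ) ^ (i + 1))⁻¹ := by
  classical
  have := DFunLike.finite (V ≃ₗ[K] V)
  have := Fintype.ofFinite (V ≃ₗ[K] V)
  set q : ℚ := (Fintype.card K : ℚ)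
  set n := finrank K V
  let d (g : V ≃ₗ[K] V) : ℕ := finrank K (g : V →ₗ[K] V).fixedSubmodule
  calc (Nat.card {g : V ≃ₗ[K] V // (g : V →ₗ[K] V).fixedSubmodule = ⊥} : ℚ)
      = ∑ g : V ≃ₗ[K] V, if d g = 0 then 1 else 0 := by
        simp only [d, Submodule.finrank_eq_zero, sum_boole, Nat.card_eq_fintype_card,
          Fintype.card_subtype]
    _ = ∑ g : V ≃ₗ[K] V, ∑ k ∈ range (n + 1),
          ∏ i ∈ range k, (q ^ d g - q ^ i) / (1 - q ^ (i + 1)) :=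
        sum_congr rfl fun g _ ↦ (sum_prod_pow_sub_pow_div_one_sub_pow
          (fun i _ ↦ card_pow_succ_ne_one K i) (Submodule.finrank_le _)).symm
    _ = ∑ k ∈ range (n + 1), (∑ g : V ≃ₗ[K] V, ∏ i ∈ range k, (q ^ d g - q ^ i)) *
          ∏ i ∈ range k, (1 - q ^ (i + 1))⁻¹ := by
        simp only [div_eq_mul_inv, prod_mul_distrib, sum_mul]
        exact sum_comm
    _ = Nat.card (V ≃ₗ[K] V) * ∑ k ∈ range (n + 1), ∏ i ∈ range k, (1 - q ^ (i + 1))⁻¹ := by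
        rw [mul_sum]
        refine sum_congr rfl fun k hk ↦ ?_
        rw [sum_prod_pow_finrank_fixedSubmodule_sub_pow ℚ (Nat.lt_succ_iff.1 (mem_range.1 hk))]

end Counting

theorem isUnit_sub_one_iff_fixedSubmodule_eq_bot {K V : Type*} [DivisionRing K] [AddCommGroup V]
    [Module K V] [FiniteDimensional K V] (f : V →ₗ[K] V) :
    IsUnit (f - 1) ↔ f.fixedSubmodule = ⊥ := by
  rw [LinearMap.isUnit_iff_ker_eq_bot, LinearMap.fixedSubmodule_eq_ker]
  rfl

theorem ncard_isUnit_and {M : Type*} [Monoid M] (p : M → Prop) :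
    {x : M | IsUnit x ∧ p x}.ncard = Nat.card {u : Mˣ // p u} := by
  have image_val : {x : M | IsUnit x ∧ p x} = Units.val '' {u : Mˣ | p u} := by
    ext x
    constructor
    · rintro ⟨⟨u, rfl⟩, hu⟩
      exact ⟨u, hu, rfl⟩
    · rintro ⟨u, hu, rfl⟩
      exact ⟨u.isUnit, hu⟩
  rw [image_val, Set.ncard_image_of_injective _ Units.val_injective]
  rfl

section Matrices

variable (F : Type*) [Field F]

/-- The identification of `GL ι F` with the group of linear automorphisms of `ι → F`. -/
noncomputable def generalLinearGroupEquivLinearEquiv (ι : Type*) [Fintype ι] [DecidableEq ι] :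
    GL ι F ≃* ((ι → F) ≃ₗ[F] (ι → F)) :=
  Matrix.GeneralLinearGroup.toLin.trans (LinearMap.GeneralLinearGroup.generalLinearEquiv F (ι → F))

theorem ncard_isUnit_and_isUnit_sub_one_eq_card (ι : Type*) [Fintype ι] [DecidableEq ι] :
    {X : Matrix ι ι F | IsUnit X ∧ IsUnit (X - 1)}.ncard =
      Nat.card {g : (ι → F) ≃ₗ[F] (ι → F) //
        (g : (ι → F) →ₗ[F] (ι → F)).fixedSubmodule = ⊥} := by
  rw [ncard_isUnit_and fun X : Matrix ι ι F ↦ IsUnit (X - 1)]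
  refine Nat.card_congr ((generalLinearGroupEquivLinearEquiv F ι).toEquiv.subtypeEquiv fun A ↦ ?_)
  rw [← Matrix.isUnit_toLin'_iff, map_sub, Matrix.toLin'_one]
  exact isUnit_sub_one_iff_fixedSubmodule_eq_bot _

variable [Fintype F] (n : ℕ)

theorem cast_card_GL (R : Type*) [CommRing R] :
    (Nat.card (GL (Fin n) F) : R) =
      ∏ i ∈ range n, ((Fintype.card F : R) ^ n - (Fintype.card F : R) ^ i) := by
  rw [Nat.card_congr (Matrix.equiv_GL_linearindependent n), cast_card_linearIndependent,
    finrank_fin_fun]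

theorem ncard_isUnit_and_isUnit_sub_one :
    ({X : Matrix (Fin n) (Fin n) F | IsUnit X ∧ IsUnit (X - 1)}.ncard : ℚ) =
      (∏ i ∈ range n, ((Fintype.card F : ℚ) ^ n - (Fintype.card F : ℚ) ^ i)) *
        ∑ k ∈ range (n + 1), ∏ i ∈ range k, (1 - (Fintype.card F : ℚ) ^ (i + 1))⁻¹ := by
  rw [ncard_isUnit_and_isUnit_sub_one_eq_card, card_linearEquiv_fixedSubmodule_eq_bot,
    ← Nat.card_congr (generalLinearGroupEquivLinearEquiv F (Fin n)).toEquiv, cast_card_GL,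
    finrank_fin_fun]

theorem ncard_isUnit_and_isUnit_sub_one_succ :
    ({X : Matrix (Fin (n + 1)) (Fin (n + 1)) F | IsUnit X ∧ IsUnit (X - 1)}.ncard : ℤ) =
      {X : Matrix (Fin n) (Fin n) F | IsUnit X ∧ IsUnit (X - 1)}.ncard *
          ((Fintype.card F : ℤ) ^ (n + 1) - 1) * (Fintype.card F : ℤ) ^ n +
        (-1) ^ (n + 1) * (Fintype.card F : ℤ) ^ ((n + 1) * n / 2) := by
  rw [← Int.cast_inj (α := ℚ)]
  push_cast
  have last_term := prod_pow_sub_pow_mul_prod_inv_one_sub_pow (n := n + 1)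
    fun i _ ↦ card_pow_succ_ne_one F i
  rw [ncard_isUnit_and_isUnit_sub_one, ncard_isUnit_and_isUnit_sub_one, sum_range_succ, mul_add,
    last_term, prod_pow_sub_pow_succ, Nat.add_sub_cancel]
  ring

end Matrices

/-- Let `F` be a finite field with `q` elements and `eₙ` the number of linear
derangements in `M_n(F)`, i.e. of matrices `X` with both `X` and `X - Iₙ` invertible.
Then `e₁ = q - 2` and, for `n ≥ 2`,
`eₙ = e_{n-1} · (qⁿ - 1) · q^(n-1) + (-1)ⁿ · q^(n(n-1)/2)`. -/
theorem linearDerangements_recurrence (F : Type*) [Field F] [Fintype F] :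
    (({X : Matrix (Fin 1) (Fin 1) F | IsUnit X ∧ IsUnit (X - 1)}.ncard : ℤ)
        = (Fintype.card F : ℤ) - 2) ∧
    ∀ n : ℕ, 2 ≤ n →
      (({X : Matrix (Fin n) (Fin n) F | IsUnit X ∧ IsUnit (X - 1)}.ncard : ℤ)
        = ({X : Matrix (Fin (n - 1)) (Fin (n - 1)) F |
              IsUnit X ∧ IsUnit (X - 1)}.ncard : ℤ)
            * ((Fintype.card F : ℤ) ^ n - 1) * (Fintype.card F : ℤ) ^ (n - 1)
          + (-1) ^ n * (Fintype.card F : ℤ) ^ (n * (n - 1) / 2)) := by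
  have recurrence := ncard_isUnit_and_isUnit_sub_one_succ F
  refine ⟨?_, fun n hn ↦ ?_⟩
  · have empty_matrix :
        {X : Matrix (Fin 0) (Fin 0) F | IsUnit X ∧ IsUnit (X - 1)}.ncard = 1 :=
      Nat.cast_injective (R := ℚ) <| (ncard_isUnit_and_isUnit_sub_one F 0).trans (by simp)
    rw [recurrence 0, empty_matrix]
    push_cast
    ring
  · obtain ⟨m, rfl⟩ := Nat.exists_eq_add_of_le' (one_le_two.trans hn)
    exact recurrence m
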